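/- Let n ≥ 2 and let b be a real number with |b| < 1. Define F : ℝⁿ → ℝ by F(y) = ‖y‖ + b·y₁. Then for every nonzero y ∈ ℝⁿ, the determinant of the fundamental tensor matrix g(y) (the Hessian of ½F² at y) equals (F(y)/‖y‖)^{n+1}. -/

import Mathlib

/-!
Write `a = ‖y‖`, `u = y / a`, `t = F(y) / a` and `v = u + b e₁` (the gradient of `F` at `y`).
Differentiating `F² / 2` twice gives `g(y) = t (I - u uᵀ) + v vᵀ`, a rank-two perturbation of `t I`.
By the Weinstein–Aronszajn identity `det (I + U V) = det (I + V U)` its determinant reduces to a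
`2 × 2` one, and since `u ⬝ u = 1` and `u ⬝ v = 1 + b u₁ = t`, that determinant is
`tⁿ · (u ⬝ v)² / t = t ^ (n + 1)`.
-/

/-- The Randers norm `F(y) = ‖y‖ + b·y₁` on `ℝⁿ` (Euclidean norm). -/
noncomputable def randersF (n : ℕ) (hn : 0 < n) (b : ℝ)
    (y : EuclideanSpace ℝ (Fin n)) : ℝ :=
  ‖y‖ + b * y ⟨0, hn⟩

/-- The fundamental tensor of the Randers norm: the Hessian matrix of
`½ F²` at `y`, with entries `g_ij(y) = ½ ∂²(F²)/∂yⁱ∂yʲ (y)`. -/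
noncomputable def fundTensor (n : ℕ) (hn : 0 < n) (b : ℝ)
    (y : EuclideanSpace ℝ (Fin n)) : Matrix (Fin n) (Fin n) ℝ :=
  fun i j =>
    fderiv ℝ (fun z => fderiv ℝ (fun w => randersF n hn b w ^ 2 / 2) z
      (EuclideanSpace.single j 1)) y (EuclideanSpace.single i 1)

open Matrix in
/-- The determinant of `t (I - u uᵀ) + v vᵀ` for a unit vector `u` with `u ⬝ v = t ≠ 0`;
the value of `v ⬝ v` plays no role. -/
lemma det_rank_two_perturbation {n : ℕ} (t : ℝ) (ht : t ≠ 0) (u v : Fin n → ℝ)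
    (huu : u ⬝ᵥ u = 1) (huv : u ⬝ᵥ v = t) :
    (Matrix.of fun i j => v i * v j + t * ((if i = j then 1 else 0) - u i * u j)).det
      = t ^ (n + 1) := by
  let U : Matrix (Fin n) (Fin 2) ℝ := Matrix.of fun i => ![-u i, v i / t]
  let V : Matrix (Fin 2) (Fin n) ℝ := Matrix.of ![u, v]
  have key : (Matrix.of fun i j => v i * v j + t * ((if i = j then 1 else 0) - u i * u j))
      = t • (1 + U * V) := by
    ext i j
    simp [U, V, Matrix.mul_apply, Fin.sum_univ_two, Matrix.one_apply]
    field_simp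
    ring
  have hvu : v ⬝ᵥ u = t := by rw [dotProduct_comm, huv]
  have h00 : (V * U) 0 0 = -1 := by
    rw [← huu]
    simp [U, V, Matrix.mul_apply, dotProduct]
  have h01 : (V * U) 0 1 = 1 := by
    have h : (V * U) 0 1 = u ⬝ᵥ v / t := by
      simp [U, V, Matrix.mul_apply, dotProduct, Finset.sum_div, mul_div_assoc]
    rw [h, huv, div_self ht]
  have h10 : (V * U) 1 0 = -t := by
    rw [← hvu]
    simp [U, V, Matrix.mul_apply, dotProduct]
  rw [key, Matrix.det_smul, Matrix.det_one_add_mul_comm, Matrix.det_fin_two]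
  simp [h00, h01, h10, pow_succ]

lemma hasFDerivAt_norm_euclidean {n : ℕ} {z : EuclideanSpace ℝ (Fin n)} (hz : z ≠ 0) :
    HasFDerivAt (fun w : EuclideanSpace ℝ (Fin n) => ‖w‖) (‖z‖⁻¹ • innerSL ℝ z) z := by
  have h := (hasStrictFDerivAt_norm_sq z).hasFDerivAt.sqrt (by simpa using hz)
  simp only [Real.sqrt_sq (norm_nonneg _)] at h
  have hz' : ‖z‖ ≠ 0 := norm_ne_zero_iff.mpr hz
  refine h.congr_fderiv ?_
  ext w
  simp
  field_simp

lemma hasFDerivAt_coord {n : ℕ} (k : Fin n) (z : EuclideanSpace ℝ (Fin n)) :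
    HasFDerivAt (fun w : EuclideanSpace ℝ (Fin n) => w k)
      (EuclideanSpace.proj k : EuclideanSpace ℝ (Fin n) →L[ℝ] ℝ) z :=
  (EuclideanSpace.proj k : EuclideanSpace ℝ (Fin n) →L[ℝ] ℝ).hasFDerivAt

lemma hasFDerivAt_randersF {n : ℕ} (hn : 0 < n) (b : ℝ) {z : EuclideanSpace ℝ (Fin n)}
    (hz : z ≠ 0) :
    HasFDerivAt (randersF n hn b)
      (‖z‖⁻¹ • innerSL ℝ z + b • EuclideanSpace.proj (⟨0, hn⟩ : Fin n)) z :=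
  (hasFDerivAt_norm_euclidean hz).add ((hasFDerivAt_coord ⟨0, hn⟩ z).const_mul b)

lemma fderiv_half_sq {n : ℕ} (hn : 0 < n) (b : ℝ) {z : EuclideanSpace ℝ (Fin n)}
    (hz : z ≠ 0) (j : Fin n) :
    fderiv ℝ (fun w => randersF n hn b w ^ 2 / 2) z (EuclideanSpace.single j 1)
      = randersF n hn b z * (‖z‖⁻¹ * z j + b * (if (⟨0, hn⟩ : Fin n) = j then 1 else 0)) := by
  have h := ((hasFDerivAt_randersF hn b hz).pow 2).mul_const (2⁻¹ : ℝ)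
  simp only [div_eq_mul_inv]
  rw [h.fderiv]
  simp [EuclideanSpace.inner_single_right]
  split_ifs <;> ring

lemma fundTensor_apply {n : ℕ} (hn : 0 < n) (b : ℝ) {y : EuclideanSpace ℝ (Fin n)}
    (hy : y ≠ 0) (i j : Fin n) :
    fundTensor n hn b y i j =
      (‖y‖⁻¹ * y i + b * (if (⟨0, hn⟩ : Fin n) = i then 1 else 0))
        * (‖y‖⁻¹ * y j + b * (if (⟨0, hn⟩ : Fin n) = j then 1 else 0))
      + randersF n hn b y / ‖y‖
        * ((if i = j then 1 else 0) - (‖y‖⁻¹ * y i) * (‖y‖⁻¹ * y j)) := by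
  have hy' : ‖y‖ ≠ 0 := norm_ne_zero_iff.mpr hy
  -- The formula for the gradient holds on the open set `z ≠ 0`, so it may be differentiated at `y`.
  have hev : (fun z => fderiv ℝ (fun w => randersF n hn b w ^ 2 / 2) z
      (EuclideanSpace.single j 1)) =ᶠ[nhds y] fun z => randersF n hn b z *
        (‖z‖⁻¹ * z j + b * (if (⟨0, hn⟩ : Fin n) = j then 1 else 0)) := by
    filter_upwards [isOpen_ne.mem_nhds hy] with z hz
    exact fderiv_half_sq hn b hz j
  have hinv := (hasDerivAt_inv hy').comp_hasFDerivAt y (hasFDerivAt_norm_euclidean hy)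
  have h := (hasFDerivAt_randersF hn b hy).mul ((hinv.mul (hasFDerivAt_coord j y)).add_const
    (b * (if (⟨0, hn⟩ : Fin n) = j then 1 else 0)))
  unfold fundTensor
  rw [hev.fderiv_eq]
  erw [h.fderiv]
  simp [EuclideanSpace.inner_single_right, eq_comm (a := j) (b := i)]
  split_ifs <;> field_simp <;> ring

lemma randersF_pos {n : ℕ} (hn : 0 < n) {b : ℝ} (hb : |b| < 1)
    {y : EuclideanSpace ℝ (Fin n)} (hy : y ≠ 0) : 0 < randersF n hn b y := by
  have hy' : 0 < ‖y‖ := norm_pos_iff.mpr hy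
  have h1 : |y ⟨0, hn⟩| ≤ ‖y‖ := by simpa using PiLp.norm_apply_le y ⟨0, hn⟩
  have h2 : |b * y ⟨0, hn⟩| < ‖y‖ := by
    rw [abs_mul]
    nlinarith [abs_nonneg b, abs_nonneg (y ⟨0, hn⟩)]
  unfold randersF
  linarith [(abs_lt.mp h2).1]

/-- The determinant of the fundamental tensor of the Randers norm
`F(y) = ‖y‖ + b y₁` equals `(F(y)/‖y‖)^(n+1)` at every nonzero `y`. -/
theorem killing_frames_stmt5 (n : ℕ) (hn : 2 ≤ n) (b : ℝ) (hb : |b| < 1) :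
    ∀ y : EuclideanSpace ℝ (Fin n), y ≠ 0 →
      (fundTensor n (by omega) b y).det
        = (randersF n (by omega) b y / ‖y‖) ^ (n + 1) := by
  intro y hy
  have hn0 : 0 < n := by omega
  have hy' : ‖y‖ ≠ 0 := norm_ne_zero_iff.mpr hy
  have huu : (fun i => ‖y‖⁻¹ * y i) ⬝ᵥ (fun i => ‖y‖⁻¹ * y i) = 1 := by
    have hs : ∑ i, y i * y i = ‖y‖ ^ 2 := by
      rw [EuclideanSpace.real_norm_sq_eq]
      simp only [sq]
    calc _ = (‖y‖⁻¹) ^ 2 * ∑ i, y i * y i := by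
          rw [dotProduct, Finset.mul_sum]
          exact Finset.sum_congr rfl fun i _ => by ring
      _ = 1 := by rw [hs]; field_simp
  rw [← det_rank_two_perturbation (randersF n hn0 b y / ‖y‖)
    (div_ne_zero (randersF_pos hn0 hb hy).ne' hy') (fun i => ‖y‖⁻¹ * y i)
    (fun i => ‖y‖⁻¹ * y i + b * (if (⟨0, hn0⟩ : Fin n) = i then 1 else 0)) huu]
  · congr 1
    ext i j
    exact fundTensor_apply hn0 b hy i j
  · have hadd : (fun i => ‖y‖⁻¹ * y i + b * (if (⟨0, hn0⟩ : Fin n) = i then 1 else 0))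
        = (fun i => ‖y‖⁻¹ * y i) + fun i => b * (if (⟨0, hn0⟩ : Fin n) = i then 1 else 0) := rfl
    rw [hadd, dotProduct_add, huu]
    simp [dotProduct, randersF]
    field_simp
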